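/- For all integers k ≥ 4 and n ≥ 1, the number of (4,3)-regular overpartitions satisfies R̄_{4,3}(2^{k+2}·n) ≡ 0 (mod 2^{3k+2}); moreover, for all integers k ≥ 4 and n ≥ 0, R̄_{4,3}(2^{k+1}(4n+3)) ≡ 0 (mod 2^{3k+1}) and R̄_{4,3}(2^{k+1}(8n+5)) ≡ 0 (mod 2^{3k}). -/

import Mathlib

/-- Number of partitions of `a` with no part divisible by `ℓ` or `μ`
(the non-overlined parts of an `(ℓ,μ)`-regular overpartition). -/
def regularCount (ℓ μ a : ℕ) : ℕ :=
  Fintype.card {p : a.Partition // ∀ i ∈ p.parts, ¬ ℓ ∣ i ∧ ¬ μ ∣ i}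

/-- Number of partitions of `a` into distinct parts with no part divisible by `ℓ` or `μ`
(the overlined parts of an `(ℓ,μ)`-regular overpartition). -/
def regularDistinctCount (ℓ μ a : ℕ) : ℕ :=
  Fintype.card {p : a.Partition // p.parts.Nodup ∧ ∀ i ∈ p.parts, ¬ ℓ ∣ i ∧ ¬ μ ∣ i}

/-- `Rbar ℓ μ n` is the number of `(ℓ,μ)`-regular overpartitions of `n`: pairs `(λ, δ)`
where `λ` is a partition, `δ` is a partition into distinct parts, `|λ| + |δ| = n`,
and no part of `λ` or `δ` is divisible by `ℓ` or by `μ`. -/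
def Rbar (ℓ μ n : ℕ) : ℕ :=
  ∑ ab ∈ Finset.HasAntidiagonal.antidiagonal n, regularCount ℓ μ ab.1 * regularDistinctCount ℓ μ ab.2

section helpers

open PowerSeries

set_option linter.unusedSimpArgs false


noncomputable def th {ι : Type} (w : ι → ℕ) : ℤ⟦X⟧ :=
  PowerSeries.mk fun n => (Nat.card {i // w i = n} : ℤ)

abbrev FinFib {ι : Type} (w : ι → ℕ) : Prop := ∀ n, Finite {i // w i = n}

lemma th_congr {ι κ : Type} {w : ι → ℕ} {v : κ → ℕ} (f : ι → κ) (hf : Function.Bijective f)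
    (h : ∀ i, v (f i) = w i) : th w = th v := by
  ext n
  simp only [th, coeff_mk]
  congr 1
  exact Nat.card_congr ((Equiv.ofBijective f hf).subtypeEquiv (fun i => by simp [h]))

lemma th_sum {ι κ : Type} {w : ι → ℕ} {v : κ → ℕ} (hw : FinFib w) (hv : FinFib v) :
    th (Sum.elim w v) = th w + th v := by
  ext n
  simp only [th, coeff_mk, map_add]
  have := hw n
  have := hv n
  rw [← Nat.cast_add, ← Nat.card_sum]
  congr 1
  exact Nat.card_congr (Equiv.subtypeSum)

lemma th_mul {ι κ : Type} {w : ι → ℕ} {v : κ → ℕ} (hw : FinFib w) (hv : FinFib v) :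
    th (fun p : ι × κ => w p.1 + v p.2) = th w * th v := by
  ext n
  simp only [th, coeff_mul, coeff_mk]
  have e : {p : ι × κ // w p.1 + v p.2 = n} ≃
      Σ a : {a : ℕ × ℕ // a ∈ Finset.HasAntidiagonal.antidiagonal n}, {i // w i = a.1.1} × {j // v j = a.1.2} :=
    { toFun := fun p => ⟨⟨(w p.1.1, v p.1.2), by simpa using p.2⟩, ⟨p.1.1, rfl⟩, ⟨p.1.2, rfl⟩⟩
      invFun := fun q => ⟨(q.2.1.1, q.2.2.1), by
        rw [q.2.1.2, q.2.2.2]; exact Finset.HasAntidiagonal.mem_antidiagonal.mp q.1.2⟩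
      left_inv := fun p => rfl
      right_inv := by
        rintro ⟨⟨⟨a, b⟩, h⟩, ⟨i, hi⟩, ⟨j, hj⟩⟩
        dsimp at hi hj
        subst hi hj
        rfl }
  rw [Nat.card_congr e]
  have := fun n => hw n
  have := fun n => hv n
  rw [Nat.card_sigma]
  rw [Finset.univ_eq_attach, Finset.sum_attach (Finset.HasAntidiagonal.antidiagonal n) (fun a : ℕ × ℕ => Nat.card ({i // w i = a.1} × {j // v j = a.2}))]
  push_cast [Nat.card_prod]
  rfl

lemma th_expand {ι : Type} (w : ι → ℕ) (m : ℕ) (hm : m ≠ 0) :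
    expand m hm (th w) = th (fun i => m * w i) := by
  ext n
  rw [coeff_expand]
  simp only [th, coeff_mk]
  split_ifs with h
  · obtain ⟨c, rfl⟩ := h
    rw [Nat.mul_div_cancel_left _ (Nat.pos_of_ne_zero hm)]
    simp [hm]
  · have : IsEmpty {i // m * w i = n} := ⟨fun i => h ⟨_, i.2.symm⟩⟩
    simp

lemma th_X {ι : Type} (w : ι → ℕ) (k : ℕ) :
    X ^ k * th w = th (fun i => w i + k) := by
  ext n
  rw [coeff_X_pow_mul']
  simp only [th, coeff_mk]
  split_ifs with h
  · congr 1
    exact Nat.card_congr (Equiv.subtypeEquivRight (fun i => by omega))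
  · have : IsEmpty {i // w i + k = n} := ⟨fun i => h (by have := i.2; omega)⟩
    simp

lemma ff_int {w : ℤ → ℕ} (h : ∀ i, i.natAbs ≤ w i + 1) : FinFib w := by
  intro n
  apply Set.Finite.subset (Set.finite_Icc (-(n+1):ℤ) (n+1))
  intro i hi
  have := h i
  rw [Set.mem_ofPred.mp hi] at this
  simp only [Set.mem_Icc]
  omega

lemma ff_prod {ι κ : Type} {w : ι → ℕ} {v : κ → ℕ} (hw : FinFib w) (hv : FinFib v) :
    FinFib (fun p : ι × κ => w p.1 + v p.2) := by
  intro n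
  have h1 : (⋃ m ∈ Set.Iic n, {i | w i = m}).Finite := Set.Finite.biUnion (Set.finite_Iic n) (fun m _ => hw m)
  have h2 : (⋃ m ∈ Set.Iic n, {i | v i = m}).Finite := Set.Finite.biUnion (Set.finite_Iic n) (fun m _ => hv m)
  apply Set.Finite.subset (h1.prod h2)
  rintro ⟨i, j⟩ hij
  have := Set.mem_ofPred.mp hij
  simp
  dsimp at this
  omega

lemma ff_add {ι : Type} {w : ι → ℕ} (hw : FinFib w) (k : ℕ) : FinFib (fun i => w i + k) := by
  intro n
  exact Set.Finite.subset (hw (n-k)) (fun i hi => by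
    have h : w i + k = n := hi
    exact (by omega : w i = n - k))

lemma ff_mul {ι : Type} {w : ι → ℕ} (hw : FinFib w) (m : ℕ) (hm : m ≠ 0) :
    FinFib (fun i => m * w i) := by
  intro n
  exact Set.Finite.subset (hw (n/m)) (fun i hi => by
    have := Set.mem_ofPred.mp hi
    show w i = n / m
    rw [← this, Nat.mul_div_cancel_left _ (Nat.pos_of_ne_zero hm)])

def wphi (n : ℤ) : ℕ := (n ^ 2).toNat
def wpsi (n : ℤ) : ℕ := (2 * n ^ 2 + n).toNat

lemma wphi_c (n : ℤ) : (wphi n : ℤ) = n ^ 2 := Int.toNat_of_nonneg (by positivity)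
lemma wpsi_c (n : ℤ) : (wpsi n : ℤ) = 2 * n ^ 2 + n :=
  Int.toNat_of_nonneg (by
    rcases le_or_gt 0 n with h | h
    · positivity
    · nlinarith)

lemma ff_phi : FinFib wphi := ff_int (fun i => by
  zify; rw [wphi_c, abs_le]; constructor <;> nlinarith)
lemma ff_psi : FinFib wpsi := ff_int (fun i => by
  zify; rw [wpsi_c, abs_le]; constructor <;> nlinarith [sq_nonneg (i+1), sq_nonneg i, sq_nonneg (2*i+1)])

noncomputable def phi : ℤ⟦X⟧ := th wphi
noncomputable def psi : ℤ⟦X⟧ := th wpsi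
noncomputable def phim : ℤ⟦X⟧ := evalNegHom phi
noncomputable def E (m : ℕ) [NeZero m] : ℤ⟦X⟧ →ₐ[ℤ] ℤ⟦X⟧ := expand m (NeZero.ne m)

lemma T1 : phi = E 4 phi + 2 * X * E 8 psi := by
  have h : phi = th (Sum.elim (fun i => 4 * wphi i) (Sum.elim (fun i => 8 * wpsi i + 1) (fun i => 8 * wpsi i + 1))) := by
    symm
    apply th_congr (Sum.elim (fun i => 2 * i) (Sum.elim (fun i => 4 * i + 1) (fun i => -(4 * i + 1))))
    · constructor
      · rintro (a | a | a) (b | b | b) h <;> simp at h ⊢ <;> omega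
      · intro n
        have : n % 4 = 0 ∨ n % 4 = 1 ∨ n % 4 = 2 ∨ n % 4 = 3 := by omega
        rcases this with h | h | h | h
        · exact ⟨Sum.inl (n / 2), by simp; omega⟩
        · exact ⟨Sum.inr (Sum.inl (n / 4)), by simp; omega⟩
        · exact ⟨Sum.inl (n / 2), by simp; omega⟩
        · exact ⟨Sum.inr (Sum.inr ((-n) / 4)), by simp; omega⟩
    · rintro (a | a | a) <;> zify <;> simp [wphi_c, wpsi_c] <;> ring
  have f8 := ff_add (ff_mul ff_psi 8 (by norm_num)) 1
  rw [th_sum (ff_mul ff_phi 4 (by norm_num)), th_sum f8 f8, ← th_X, ← th_expand wpsi 8 (by norm_num), ← th_expand wphi 4 (by norm_num)] at h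
  · rw [show E 4 phi = expand 4 (by norm_num) (th wphi) from rfl, show E 8 psi = expand 8 (by norm_num) (th wpsi) from rfl]
    rw [h]; ring
  · intro n
    have h1 := f8 n
    have : Finite ({ a // Sum.elim (fun i => 8 * wpsi i + 1) (fun i => 8 * wpsi i + 1) (Sum.inl a) = n } ⊕
      { b // Sum.elim (fun i => 8 * wpsi i + 1) (fun i => 8 * wpsi i + 1) (Sum.inr b) = n }) :=
      @Finite.instSum _ _ h1 h1
    exact Finite.of_equiv _ (Equiv.subtypeSum (p := fun c => Sum.elim (fun i => 8 * wpsi i + 1) (fun i => 8 * wpsi i + 1) c = n)).symm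

lemma T3 : phi * E 2 psi = psi ^ 2 := by
  rw [pow_two, show E 2 psi = expand 2 (by norm_num) (th wpsi) from rfl, th_expand, phi, psi,
    ← th_mul ff_phi (ff_mul ff_psi 2 (by norm_num)), ← th_mul ff_psi ff_psi]
  symm
  apply th_congr (fun p => (p.1 - p.2, if (p.1 - p.2) % 2 = 0 then (p.1 + p.2) / 2 else (-1 - p.1 - p.2) / 2))
  · constructor
    · rintro ⟨a, b⟩ ⟨c, d⟩ h
      simp only [Prod.mk.injEq] at h ⊢
      obtain ⟨h1, h2⟩ := h
      split_ifs at h2 <;> omega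
    · rintro ⟨c, d⟩
      by_cases h : c % 2 = 0
      · refine ⟨((2 * d + c) / 2, (2 * d - c) / 2), ?_⟩
        simp only [Prod.mk.injEq]
        rw [if_pos (by omega)]
        omega
      · refine ⟨((-1 - 2 * d + c) / 2, (-1 - 2 * d - c) / 2), ?_⟩
        simp only [Prod.mk.injEq]
        rw [if_neg (by omega)]
        omega
  · rintro ⟨a, b⟩
    dsimp only
    split_ifs with h
    · obtain ⟨e, he⟩ : ∃ e, a - b = 2 * e := ⟨(a - b) / 2, by omega⟩
      obtain rfl : a = b + 2 * e := by omega
      rw [show (b + 2 * e + b) / 2 = b + e by omega]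
      zify; simp only [wphi_c, wpsi_c]; ring
    · obtain ⟨e, he⟩ : ∃ e, a - b = 2 * e + 1 := ⟨(a - b) / 2, by omega⟩
      obtain rfl : a = b + 2 * e + 1 := by omega
      rw [show (-1 - (b + 2 * e + 1) - b) / 2 = -1 - b - e by omega]
      zify; simp only [wphi_c, wpsi_c]; ring

lemma T5 : psi * E 3 psi = E 4 psi * E 6 phi + X * (E 2 phi * E 12 psi) := by
  rw [show E 3 psi = expand 3 (by norm_num) (th wpsi) from rfl,
    show E 4 psi = expand 4 (by norm_num) (th wpsi) from rfl,
    show E 12 psi = expand 12 (by norm_num) (th wpsi) from rfl,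
    show E 6 phi = expand 6 (by norm_num) (th wphi) from rfl,
    show E 2 phi = expand 2 (by norm_num) (th wphi) from rfl]
  simp only [th_expand, psi]
  have f1 := ff_mul ff_psi 3 (by norm_num)
  have f2 := ff_mul ff_psi 4 (by norm_num)
  have f3 := ff_mul ff_psi 12 (by norm_num)
  have f4 := ff_mul ff_phi 6 (by norm_num)
  have f5 := ff_mul ff_phi 2 (by norm_num)
  rw [← th_mul ff_psi f1, ← th_mul f2 f4, ← th_mul f5 f3]
  have := th_X (fun p : ℤ × ℤ => 2 * wphi p.1 + 12 * wpsi p.2) 1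
  rw [pow_one] at this
  rw [this, ← th_sum (ff_prod f2 f4) (ff_add (ff_prod f5 f3) 1)]
  symm
  -- u = a+3b+1, v = b-a ; a = b - v, 4b = u+v-1
  apply th_congr (Sum.elim
    (fun p => if p.2 % 2 = 0 then ((4 * p.1 + 2 * p.2) / 4 - 2 * p.2, (4 * p.1 + 2 * p.2) / 4)
      else ((-4 * p.1 + 2 * p.2 - 2) / 4 - 2 * p.2, (-4 * p.1 + 2 * p.2 - 2) / 4))
    (fun p => if p.1 % 2 = 0 then ((4 * p.2 + 2 * p.1) / 4 - (4 * p.2 + 1), (4 * p.2 + 2 * p.1) / 4)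
      else ((-4 * p.2 + 2 * p.1 - 2) / 4 + (4 * p.2 + 1), (-4 * p.2 + 2 * p.1 - 2) / 4)))
  · constructor
    · rintro (⟨a, b⟩ | ⟨a, b⟩) (⟨c, d⟩ | ⟨c, d⟩) h <;>
      simp only [Sum.elim_inl, Sum.elim_inr] at h <;> split_ifs at h <;>
      simp only [Prod.mk.injEq, Sum.inl.injEq, Sum.inr.injEq, reduceCtorEq] at h ⊢ <;> omega
    · rintro ⟨a, b⟩
      by_cases h : (b - a) % 2 = 0
      · by_cases h' : (b - a) % 4 = 0
        · refine ⟨Sum.inl ((a + 3 * b) / 4, (b - a) / 2), ?_⟩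
          simp only [Sum.elim_inl]
          rw [if_pos (by omega)]
          simp only [Prod.mk.injEq]; omega
        · refine ⟨Sum.inl ((-(a + 3 * b + 1)) / 4, (b - a) / 2), ?_⟩
          simp only [Sum.elim_inl]
          rw [if_neg (by omega)]
          simp only [Prod.mk.injEq]; omega
      · by_cases h' : (b - a) % 4 = 1
        · refine ⟨Sum.inr ((a + 3 * b + 1) / 2, (b - a) / 4), ?_⟩
          simp only [Sum.elim_inr]
          rw [if_pos (by omega)]
          simp only [Prod.mk.injEq]; omega
        · refine ⟨Sum.inr ((a + 3 * b + 1) / 2, (-(b - a)) / 4), ?_⟩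
          simp only [Sum.elim_inr]
          rw [if_neg (by omega)]
          simp only [Prod.mk.injEq]; omega
  · rintro (⟨a, b⟩ | ⟨a, b⟩) <;> simp only [Sum.elim_inl, Sum.elim_inr] <;> split_ifs with h
    · obtain ⟨e, rfl⟩ : ∃ e, b = 2 * e := ⟨b / 2, by omega⟩
      rw [show (4 * a + 2 * (2 * e)) / 4 = a + e by omega]
      zify; simp only [wphi_c, wpsi_c]; ring
    · obtain ⟨e, rfl⟩ : ∃ e, b = 2 * e + 1 := ⟨b / 2, by omega⟩
      rw [show (-4 * a + 2 * (2 * e + 1) - 2) / 4 = - a + e by omega]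
      zify; simp only [wphi_c, wpsi_c]; ring
    · obtain ⟨e, rfl⟩ : ∃ e, a = 2 * e := ⟨a / 2, by omega⟩
      rw [show (4 * b + 2 * (2 * e)) / 4 = b + e by omega]
      zify; simp only [wphi_c, wpsi_c]; ring
    · obtain ⟨e, rfl⟩ : ∃ e, a = 2 * e + 1 := ⟨a / 2, by omega⟩
      rw [show (-4 * b + 2 * (2 * e + 1) - 2) / 4 = - b + e by omega]
      zify; simp only [wphi_c, wpsi_c]; ring


lemma coeff_E (m : ℕ) [NeZero m] (f : ℤ⟦X⟧) (n : ℕ) :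
    coeff n (E m f) = if m ∣ n then coeff (n / m) f else 0 := coeff_expand _ _ _

lemma E_X (m : ℕ) [NeZero m] : E m X = X ^ m := expand_X _ _

lemma E_E (m n k : ℕ) [NeZero m] [NeZero n] [NeZero k] (h : k = m * n) (f : ℤ⟦X⟧) :
    E m (E n f) = E k f := by
  subst h
  exact (expand_mul m (NeZero.ne m) n (NeZero.ne n) f).symm

lemma E_inj (m : ℕ) [NeZero m] {f g : ℤ⟦X⟧} (h : E m f = E m g) : f = g := by
  ext n
  have := congrArg (coeff (m * n)) h
  simpa [E, coeff_expand_mul] using this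

lemma neg_E (m : ℕ) [NeZero m] (f : ℤ⟦X⟧) (hm : Even m) : evalNegHom (E m f) = E m f := by
  ext n
  rw [evalNegHom, coeff_rescale, coeff_E]
  split_ifs with h
  · rw [Even.neg_one_pow (hm.trans_dvd h), one_mul]
  · simp

lemma neg_X : evalNegHom (X : ℤ⟦X⟧) = -X := evalNegHom_X

lemma neg_E' (m : ℕ) [NeZero m] (f : ℤ⟦X⟧) (hm : Odd m) :
    evalNegHom (E m f) = E m (evalNegHom f) := by
  ext n
  rw [evalNegHom, coeff_rescale, coeff_E, coeff_E]
  split_ifs with h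
  · obtain ⟨c, rfl⟩ := h
    rw [Nat.mul_div_cancel_left _ (Nat.pos_of_ne_zero (NeZero.ne m)), coeff_rescale, pow_mul, hm.neg_one_pow]
  · simp

lemma T1m : phim = E 4 phi - 2 * X * E 8 psi := by
  have := congrArg evalNegHom T1
  rw [map_add, map_mul, map_mul, neg_X, neg_E _ _ (by decide), neg_E _ _ (by decide)] at this
  rw [phim, this, map_ofNat]; ring

lemma T4 : phi ^ 2 = E 2 phi ^ 2 + 4 * X * E 4 psi ^ 2 := by
  have h1 := T1
  have h3 := congrArg (E 4) T3
  rw [map_mul, map_pow, E_E 4 2 8 rfl] at h3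
  set D := phi ^ 2 - E 2 phi ^ 2 - 4 * X * E 4 psi ^ 2 with hD
  have hDD : D = - E 2 D := by
    rw [hD]
    simp only [map_sub, map_mul, map_pow, map_ofNat, E_X, E_E 2 2 4 rfl, E_E 2 4 8 rfl]
    linear_combination (phi + E 4 phi + 2 * X * E 8 psi) * h1 + 4 * X * h3
  have h0 : ∀ n, coeff n D = 0 := by
    intro n
    induction n using Nat.strong_induction_on with
    | _ n ih =>
      have h := congrArg (coeff n) hDD
      rw [map_neg, coeff_E] at h
      split_ifs at h with h2
      · rcases Nat.eq_zero_or_pos n with rfl | hn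
        · simp only [Nat.zero_div] at h; omega
        · rw [h, ih (n / 2) (by omega), neg_zero]
      · simpa using h
  have : D = 0 := by ext n; simpa using h0 n
  linear_combination this

lemma T4m : phim ^ 2 = E 2 phi ^ 2 - 4 * X * E 4 psi ^ 2 := by
  have := congrArg evalNegHom T4
  rw [map_add, map_mul, map_mul, map_pow, map_pow, map_pow, neg_X, neg_E _ _ (by decide), neg_E _ _ (by decide)] at this
  rw [phim, this, map_ofNat]; ring

lemma T2 : phi * phim = E 2 phim ^ 2 := by
  have h := congrArg (E 2) T4m
  simp only [map_sub, map_mul, map_pow, map_ofNat, E_X, E_E 2 2 4 rfl, E_E 2 4 8 rfl] at h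
  rw [h, T1m]
  linear_combination (E 4 phi - 2 * X * E 8 psi) * T1

lemma T5' : phi * E 3 phi - 4 * X * E 2 psi * E 6 psi = phim * E 3 phim := by
  have h := congrArg (E 2) T5
  simp only [map_add, map_mul, map_pow, map_ofNat, E_X, E_E 2 2 4 rfl, E_E 2 4 8 rfl,
    E_E 2 3 6 rfl, E_E 2 6 12 rfl, E_E 2 12 24 rfl] at h
  have h1 := congrArg (E 3) T1
  have h2 := congrArg (E 3) T1m
  simp only [map_add, map_sub, map_mul, map_pow, map_ofNat, E_X, E_E 3 4 12 rfl, E_E 3 8 24 rfl] at h1 h2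
  rw [h1, h2, T1m]
  linear_combination (E 12 phi + 2 * X ^ 3 * E 24 psi) * T1 - 4 * X * h

noncomputable def U (f : ℤ⟦X⟧) : ℤ⟦X⟧ := PowerSeries.mk fun n => coeff (2 * n) f

lemma coeff_U (f : ℤ⟦X⟧) (n : ℕ) : coeff n (U f) = coeff (2 * n) f := coeff_mk _ _

lemma U_add (f g : ℤ⟦X⟧) : U (f + g) = U f + U g := by ext; simp [coeff_U]

lemma U_sub (f g : ℤ⟦X⟧) : U (f - g) = U f - U g := by ext; simp [coeff_U]

lemma U_E_mul (f g : ℤ⟦X⟧) : U (E 2 f * g) = f * U g := by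
  ext n
  rw [coeff_U, coeff_mul, coeff_mul]
  symm
  apply Finset.sum_of_injOn (fun p => (2 * p.1, 2 * p.2))
  · rintro ⟨a, b⟩ _ ⟨c, d⟩ _ h
    simp only [Prod.mk.injEq] at h ⊢; omega
  · rintro ⟨a, b⟩ h
    simp only [SetLike.mem_coe, Finset.HasAntidiagonal.mem_antidiagonal] at h ⊢
    omega
  · rintro ⟨a, b⟩ h h'
    rw [coeff_E, if_neg, zero_mul]
    rintro ⟨c, rfl⟩
    apply h'
    simp only [Finset.HasAntidiagonal.mem_antidiagonal] at h
    refine ⟨(c, n - c), ?_, ?_⟩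
    · simp only [SetLike.mem_coe, Finset.HasAntidiagonal.mem_antidiagonal]; omega
    · simp only [Prod.mk.injEq, true_and]; omega
  · rintro ⟨a, b⟩ _
    simp [coeff_E, coeff_U]

lemma U_mul_E (f g : ℤ⟦X⟧) : U (g * E 2 f) = U g * f := by
  rw [mul_comm, U_E_mul, mul_comm]

lemma U_one : U 1 = 1 := by
  ext n; rw [coeff_U, coeff_one, coeff_one]; simp

lemma U_E (f : ℤ⟦X⟧) : U (E 2 f) = f := by
  rw [← mul_one (E 2 f), U_E_mul, U_one, mul_one]

lemma U_X_E (f : ℤ⟦X⟧) : U (X * E 2 f) = 0 := by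
  ext n
  rw [coeff_U]
  rcases n with _ | n
  · simp
  · rw [show 2 * (n + 1) = (2 * n + 1) + 1 by ring, coeff_succ_X_mul, coeff_E, if_neg (by omega)]
    simp

lemma U_eo (f g : ℤ⟦X⟧) : U (E 2 f + X * E 2 g) = f := by
  rw [U_add, U_E, U_X_E, add_zero]

lemma cc_phi : constantCoeff phi = 1 := by
  rw [← coeff_zero_eq_constantCoeff, phi, th, coeff_mk]
  have : Nat.card {i // wphi i = 0} = 1 := by
    rw [Nat.card_eq_one_iff_exists]
    refine ⟨⟨0, by simp [wphi]⟩, ?_⟩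
    rintro ⟨i, hi⟩
    have := wphi_c i
    rw [hi] at this
    simp only [Subtype.mk.injEq]
    simpa using this.symm
  simp [this]

lemma cc_phim : constantCoeff phim = 1 := by
  rw [← coeff_zero_eq_constantCoeff, phim, evalNegHom, coeff_rescale]
  simp [cc_phi]

lemma phi_ne : phi ≠ 0 := fun h => by have := cc_phi; simp [h] at this
lemma phim_ne : phim ≠ 0 := fun h => by have := cc_phim; simp [h] at this
lemma E_ne (m : ℕ) [NeZero m] {f : ℤ⟦X⟧} (h : f ≠ 0) : E m f ≠ 0 := fun h' => h (E_inj m (by rw [h', map_zero]))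

lemma div_phim (f : ℤ⟦X⟧) (k : ℕ) : ∃ g, g * phim ^ k = f := by
  refine ⟨f * invOfUnit (phim ^ k) 1, ?_⟩
  rw [mul_assoc, mul_comm (invOfUnit _ _), mul_invOfUnit _ _ (by simp [cc_phim]), mul_one]

/-- first dissection -/
lemma step1 {F : ℤ⟦X⟧} (h : F * phim * E 12 phim = E 3 phim * E 4 phim) : U F * phim = phi := by
  have h1 : F * E 2 (phim ^ 2 * E 6 phim) = (phi * E 3 phim) * E 2 (E 2 phim) := by
    simp only [map_mul, map_pow, E_E 2 2 4 rfl, E_E 2 6 12 rfl]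
    linear_combination phi * h - F * E 12 phim * T2
  have h2 : phi * E 3 phim = E 2 (E 2 (phim * E 3 phim)) +
      X * E 2 (2 * (E 4 psi * E 6 phi - X * E 2 phi * E 12 psi)) := by
    rw [← T5']
    have h1 := congrArg (E 3) T1m
    simp only [map_add, map_sub, map_mul, map_pow, map_ofNat, E_X, E_E 3 4 12 rfl, E_E 3 8 24 rfl, E_E 2 2 4 rfl, E_E 2 4 8 rfl,
    E_E 2 3 6 rfl, E_E 2 6 12 rfl, E_E 2 12 24 rfl] at h1 ⊢
    rw [h1]
    linear_combination (E 12 phi - 2 * X ^ 3 * E 24 psi) * T1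
  have h3 := congrArg U h1
  rw [U_mul_E, U_mul_E, h2, U_eo] at h3
  simp only [map_mul, E_E 2 3 6 rfl] at h3
  have h4 : phim * E 6 phim ≠ 0 := mul_ne_zero phim_ne (E_ne _ phim_ne)
  apply mul_right_cancel₀ h4
  linear_combination h3 - E 6 phim * T2

lemma step2 {G : ℤ⟦X⟧} (h : G * phim = phi) : U G * phim ^ 2 = phi ^ 2 := by
  have h1 : G * E 2 (phim ^ 2) = E 2 (phi ^ 2) + X * E 2 (4 * E 2 psi ^ 2) := by
    simp only [map_mul, map_pow, map_ofNat, E_E 2 2 4 rfl]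
    linear_combination phi * h - G * T2 + T4
  have h3 := congrArg U h1
  rwa [U_mul_E, U_eo] at h3

lemma phi4 : phi ^ 4 = E 2 (phi ^ 4 + 16 * X * E 2 psi ^ 4) + X * E 2 (8 * psi ^ 4) := by
  have h3 := congrArg (E 2) T3
  simp only [map_add, map_mul, map_pow, map_ofNat, E_X, E_E 2 2 4 rfl] at h3 ⊢
  linear_combination (phi ^ 2 + E 2 phi ^ 2 + 4 * X * E 4 psi ^ 2) * T4 +
    8 * X * (E 2 phi * E 4 psi + E 2 psi ^ 2) * h3

lemma phi4m : phi ^ 4 - phim ^ 4 = 16 * X * E 2 psi ^ 4 := by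
  have h3 := congrArg (E 2) T3
  simp only [map_add, map_mul, map_pow, map_ofNat, E_X, E_E 2 2 4 rfl] at h3 ⊢
  linear_combination (phi ^ 2 + E 2 phi ^ 2 + 4 * X * E 4 psi ^ 2) * T4 -
    (phim ^ 2 + E 2 phi ^ 2 - 4 * X * E 4 psi ^ 2) * T4m +
    16 * X * (E 2 phi * E 4 psi + E 2 psi ^ 2) * h3

lemma step3 {H t : ℤ⟦X⟧} (h : H * phim ^ 2 = phi ^ 2) (ht : t * phim ^ 4 = X * E 2 psi ^ 4) :
    U H = 1 + 32 * t := by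
  have h1 : H * E 2 (phim ^ 4) = phi ^ 4 := by
    simp only [map_pow]
    linear_combination phi ^ 2 * h - H * (phi * phim + E 2 phim ^ 2) * T2
  have h3 := congrArg U h1
  rw [U_mul_E, phi4, U_eo] at h3
  apply mul_right_cancel₀ (pow_ne_zero 4 phim_ne)
  linear_combination h3 - 32 * ht + phi4m

lemma step4 {t s : ℤ⟦X⟧} (ht : t * phim ^ 4 = X * E 2 psi ^ 4) (hs : s * phim ^ 8 = X * psi ^ 8) :
    U t = 8 * s := by
  have h1 : t * E 2 (phim ^ 8) = E 2 (X * 8 * psi ^ 8) +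
      X * E 2 (psi ^ 4 * (phi ^ 4 + 16 * X * E 2 psi ^ 4)) := by
    have h4 := phi4
    simp only [map_add, map_mul, map_pow, map_ofNat, E_X, E_E 2 2 4 rfl] at h4 ⊢
    have h2 : E 2 phim ^ 8 = phi ^ 4 * phim ^ 4 := by
      rw [← mul_pow, T2]; ring
    rw [h2]
    linear_combination phi ^ 4 * ht + X * E 2 psi ^ 4 * h4
  have h3 := congrArg U h1
  rw [U_mul_E, U_eo] at h3
  apply mul_right_cancel₀ (pow_ne_zero 8 phim_ne)
  linear_combination h3 - 8 * hs

lemma step5 {s : ℤ⟦X⟧} (hs : s * phim ^ 8 = X * psi ^ 8) :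
    U s = 24 * s + 2048 * s ^ 2 := by
  have h1 : s * E 2 (phim ^ 16) = E 2 (psi ^ 4 * (24 * X * phi ^ 10 * E 2 psi ^ 2 + 1280 * X ^ 2 * phi ^ 6 * E 2 psi ^ 6
        + 6144 * X ^ 3 * phi ^ 2 * E 2 psi ^ 10)) +
      X * E 2 (psi ^ 4 * (phi ^ 12 + 15 * 16 * X * phi ^ 8 * E 2 psi ^ 4 + 15 * 256 * X ^ 2 * phi ^ 4 * E 2 psi ^ 8
        + 4096 * X ^ 3 * E 2 psi ^ 12)) := by
    have h2 : E 2 phim ^ 16 = phi ^ 8 * phim ^ 8 := by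
      rw [← mul_pow, T2]; ring
    have h5 : s * E 2 (phim ^ 16) = X * E 2 psi ^ 4 * (phi ^ 2) ^ 6 := by
      rw [map_pow, h2]
      have : psi ^ 8 = phi ^ 4 * E 2 psi ^ 4 := by rw [← mul_pow, T3]; ring
      linear_combination phi ^ 8 * hs + X * phi ^ 8 * this
    have h7 : ∀ c d : ℤ⟦X⟧, phi ^ 2 = c + 4 * X * d → (phi ^ 2) ^ 6 = (c + 4 * X * d) ^ 6 :=
      fun c d h => by rw [h]
    rw [h5, h7 _ _ T4]
    simp only [map_add, map_mul, map_pow, map_ofNat, E_X, E_E 2 2 4 rfl]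
    ring
  have h3 := congrArg U h1
  rw [U_mul_E, U_eo] at h3
  apply mul_right_cancel₀ (pow_ne_zero 16 phim_ne)
  have hp : psi ^ 4 = phi ^ 2 * E 2 psi ^ 2 := by rw [← mul_pow, T3]; ring
  have hm : phim ^ 4 = phi ^ 4 - 16 * X * E 2 psi ^ 4 := by linear_combination -phi4m
  have e1 : s * phim ^ 16 = X * (psi ^ 4) ^ 2 * (phim ^ 4) ^ 2 := by linear_combination phim ^ 8 * hs
  have e2 : s ^ 2 * phim ^ 16 = X ^ 2 * (psi ^ 4) ^ 4 := by
    linear_combination (s * phim ^ 8 + X * psi ^ 8) * hs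
  rw [h3, add_mul, mul_assoc 24 s, mul_assoc 2048, e1, e2, hp, hm]
  ring

lemma step6 {s : ℤ⟦X⟧} (hs : s * phim ^ 8 = X * psi ^ 8) :
    s ^ 2 = E 2 (48 * s + 4096 * s ^ 2) * s + E 2 s := by
  simp only [map_add, map_mul, map_pow, map_ofNat]
  obtain ⟨e, he⟩ : ∃ e, E 2 s = e := ⟨_, rfl⟩
  obtain ⟨a, ha⟩ : ∃ a, phi ^ 4 = a := ⟨_, rfl⟩
  obtain ⟨b, hb⟩ : ∃ b, phim ^ 4 = b := ⟨_, rfl⟩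
  obtain ⟨p, hp⟩ : ∃ p, X * E 2 psi ^ 4 = p := ⟨_, rfl⟩
  have h1 : s * b ^ 2 = a * p := by
    rw [← hb, ← ha, ← hp]
    have : psi ^ 8 = phi ^ 4 * E 2 psi ^ 4 := by rw [← mul_pow, T3]; ring
    linear_combination hs + X * this
  have h2 : e * (a * b) = p ^ 2 := by
    have := congrArg (E 2) hs
    simp only [map_mul, map_pow, E_X] at this
    have h2 : E 2 phim ^ 8 = phi ^ 4 * phim ^ 4 := by
      rw [← mul_pow, T2]; ring
    rw [h2] at this
    rw [← he, ← ha, ← hb, ← hp, this]; ring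
  have h3 : a - b = 16 * p := by rw [← ha, ← hb, ← hp, phi4m]; ring
  have hab : a * b ^ 4 ≠ 0 := by
    rw [← ha, ← hb]
    exact mul_ne_zero (pow_ne_zero _ phi_ne) (pow_ne_zero _ (pow_ne_zero _ phim_ne))
  rw [he]
  apply mul_left_cancel₀ hab
  have h3' : a = b + 16 * p := by linear_combination h3
  have q1 : a * b ^ 4 * s ^ 2 = a ^ 3 * p ^ 2 := by
    linear_combination a * (s * b ^ 2 + a * p) * h1
  have q2 : a * b ^ 4 * (e * s) = p ^ 3 * a * b := by
    linear_combination b * (s * b ^ 2) * h2 + b * p ^ 2 * h1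
  have q3 : a * b ^ 4 * (e ^ 2 * s) = p ^ 5 := by
    have : a * (a * b ^ 4 * (e ^ 2 * s)) = a * p ^ 5 := by
      linear_combination (s * b ^ 2) * (e * (a * b) + p ^ 2) * h2 + p ^ 4 * h1
    exact mul_left_cancel₀ (by rw [← ha]; exact pow_ne_zero _ phi_ne) this
  have q4 : a * b ^ 4 * e = p ^ 2 * b ^ 3 := by linear_combination b ^ 3 * h2
  have q : a ^ 3 = 48 * p * a * b + 4096 * p ^ 3 + b ^ 3 := by rw [h3']; ring
  linear_combination q1 - 48 * q2 - 4096 * q3 - q4 + p ^ 2 * q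

lemma step7 {s : ℤ⟦X⟧} (hs : s * phim ^ 8 = X * psi ^ 8) (n : ℕ) :
    ∃ p : Polynomial ℤ, U (s * (256 * s) ^ n) = 8 * (s * Polynomial.aeval (256 * s) p) := by
  have h6 := step6 hs
  have h5 := step5 hs
  have hrec : ∀ n, U (s * (256 * s) ^ (n + 2)) = (48 * (256 * s) + 16 * (256 * s) ^ 2) * U (s * (256 * s) ^ (n + 1))
      + 256 * (256 * s) * U (s * (256 * s) ^ n) := by
    intro n
    rw [← U_E_mul, ← U_E_mul, ← U_add]
    congr 1
    simp only [map_add, map_mul, map_pow, map_ofNat] at h6 ⊢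
    linear_combination 256 ^ 2 * s * (256 * s) ^ n * h6
  induction n using Nat.twoStepInduction with
  | zero =>
    refine ⟨3 + Polynomial.X, ?_⟩
    simp only [pow_zero, mul_one, h5, map_add, map_ofNat, Polynomial.aeval_X]; ring
  | one =>
    refine ⟨(48 * Polynomial.X + 16 * Polynomial.X ^ 2) * (3 + Polynomial.X) + 32, ?_⟩
    have : s * (256 * s) ^ 1 = E 2 (48 * (256 * s) + 16 * (256 * s) ^ 2) * s + E 2 (256 * s) := by
      simp only [map_add, map_mul, map_pow, map_ofNat] at h6 ⊢
      linear_combination 256 * h6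
    rw [this, U_add, U_E, U_E_mul, h5]
    simp only [map_add, map_mul, map_pow, map_ofNat, Polynomial.aeval_X]; ring
  | more n h1 h2 =>
    obtain ⟨p, hp⟩ := h1
    obtain ⟨q, hq⟩ := h2
    refine ⟨(48 * Polynomial.X + 16 * Polynomial.X ^ 2) * q + 256 * Polynomial.X * p, ?_⟩
    rw [hrec, hp, hq]
    simp only [map_add, map_mul, map_pow, map_ofNat, Polynomial.aeval_X]; ring

lemma coeff_ic (c : ℤ) (f : ℤ⟦X⟧) (n : ℕ) : coeff n ((c : ℤ⟦X⟧) * f) = c * coeff n f := by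
  rw [← eq_intCast (C (R := ℤ)) c, coeff_C_mul]

lemma U_const (c : ℤ) (f : ℤ⟦X⟧) : U ((c : ℤ⟦X⟧) * f) = (c : ℤ⟦X⟧) * U f := by
  ext; simp only [coeff_U, coeff_ic]

lemma step8 {s : ℤ⟦X⟧} (hs : s * phim ^ 8 = X * psi ^ 8) (p : Polynomial ℤ) :
    ∃ q : Polynomial ℤ, U (s * Polynomial.aeval (256 * s) p) = 8 * (s * Polynomial.aeval (256 * s) q) := by
  induction p using Polynomial.induction_on' with
  | add p q hp hq =>
    obtain ⟨p', hp⟩ := hp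
    obtain ⟨q', hq⟩ := hq
    exact ⟨p' + q', by rw [map_add, mul_add, U_add, hp, hq, map_add]; ring⟩
  | monomial n c =>
    obtain ⟨p, hp⟩ := step7 hs n
    refine ⟨Polynomial.C c * p, ?_⟩
    rw [Polynomial.aeval_monomial, map_mul, Polynomial.aeval_C, eq_intCast]
    rw [show s * ((c : ℤ⟦X⟧) * (256 * s) ^ n) = (c : ℤ⟦X⟧) * (s * (256 * s) ^ n) by ring, U_const, hp]
    ring

lemma step9 {s : ℤ⟦X⟧} (hs : s * phim ^ 8 = X * psi ^ 8) (j : ℕ) :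
    ∃ q : Polynomial ℤ, U^[j] s = 8 ^ j * (s * Polynomial.aeval (256 * s) q) := by
  induction j with
  | zero => exact ⟨1, by simp⟩
  | succ j ih =>
    obtain ⟨q, hq⟩ := ih
    obtain ⟨p, hp⟩ := step8 hs q
    refine ⟨p, ?_⟩
    rw [Function.iterate_succ_apply', hq]
    have : (8 ^ j * (s * Polynomial.aeval (256 * s) q) : ℤ⟦X⟧) = ((8 ^ j : ℤ) : ℤ⟦X⟧) * (s * Polynomial.aeval (256 * s) q) := by
      push_cast; rfl
    rw [this, U_const, hp]; push_cast; ring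

lemma coeff_iter (f : ℤ⟦X⟧) (j n : ℕ) : coeff n (U^[j] f) = coeff (2 ^ j * n) f := by
  induction j generalizing n with
  | zero => simp
  | succ j ih => rw [Function.iterate_succ_apply', coeff_U, ih]; congr 1; ring

lemma poly_mod {s : ℤ⟦X⟧} (q : Polynomial ℤ) :
    ∃ (c : ℤ) (r : ℤ⟦X⟧), Polynomial.aeval (256 * s) q = c + 256 * r := by
  induction q using Polynomial.induction_on with
  | C a => exact ⟨a, 0, by rw [Polynomial.aeval_C, eq_intCast]; simp⟩
  | add p q hp hq =>
    obtain ⟨a, b, h⟩ := hp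
    obtain ⟨c, d, h'⟩ := hq
    exact ⟨a + c, b + d, by rw [map_add, h, h']; push_cast; ring⟩
  | monomial n a _ =>
    exact ⟨0, (algebraMap ℤ ℤ⟦X⟧ a) * (256 * s) ^ n * s, by simp [pow_succ]; ring_nf⟩

lemma phi_two : ∃ w, phi = 1 + 2 * w ∧ ∃ v, phim = 1 + 2 * v := by
  have key : ∃ w, phi = 1 + 2 * w := by
    have h : ∀ n, n ≠ 0 → (2 : ℤ) ∣ coeff n phi := by
      intro n
      induction n using Nat.strong_induction_on with
      | _ n ih =>
        intro hn
        rw [T1, map_add, mul_assoc, show (2 : ℤ⟦X⟧) = ((2 : ℤ) : ℤ⟦X⟧) by norm_num, coeff_ic, coeff_E]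
        apply dvd_add _ (dvd_mul_right _ _)
        split_ifs with h4
        · exact ih (n / 4) (by omega) (by omega)
        · exact dvd_zero _
    refine ⟨PowerSeries.mk fun n => coeff n (phi - 1) / 2, ?_⟩
    ext n
    rw [map_add, show (2 : ℤ⟦X⟧) = ((2 : ℤ) : ℤ⟦X⟧) by norm_num, coeff_ic, coeff_mk, map_sub, coeff_one]
    split_ifs with hn
    · subst hn; simp [cc_phi]
    · have := h n hn
      omega
  obtain ⟨w, hw⟩ := key
  refine ⟨w, hw, evalNegHom w, ?_⟩
  rw [phim, hw, map_add, map_one, map_mul, map_ofNat]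

lemma s_mod {s : ℤ⟦X⟧} (hs : s * phim ^ 8 = X * psi ^ 8) :
    (∃ r, s = X * E 4 (psi ^ 2) + 4 * r) ∧ (∃ r, s = X * E 8 psi + 2 * r) := by
  obtain ⟨w, hw, v, hv⟩ := phi_two
  have h2 := congrArg (E 2) T3
  have h4 := congrArg (E 4) T3
  simp only [map_mul, map_pow, E_E 2 2 4 rfl, E_E 4 2 8 rfl] at h2 h4
  have e1 : psi ^ 8 = phi ^ 4 * E 2 phi ^ 2 * E 4 psi ^ 2 := by
    linear_combination -(psi ^ 6 + psi ^ 4 * phi * E 2 psi + psi ^ 2 * (phi * E 2 psi) ^ 2 + (phi * E 2 psi) ^ 3) * T3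
      - phi ^ 4 * (E 2 psi ^ 2 + E 2 phi * E 4 psi) * h2
  have hw2 := congrArg (E 2) hw
  have hw4 := congrArg (E 4) hw
  simp only [map_add, map_one, map_mul, map_ofNat] at hw2 hw4
  have g1 : ∃ r, s = X * E 4 (psi ^ 2) + 4 * r := by
    rw [e1, hv, hw2, hw] at hs
    rw [map_pow]
    generalize E 4 psi = P at *
    generalize E 2 w = w2 at *
    have h8 : ∃ a, (1 + 2 * v) ^ 8 = 1 + 4 * a := ⟨4 * v + 28 * v ^ 2 + 112 * v ^ 3 + 280 * v ^ 4 + 448 * v ^ 5 + 448 * v ^ 6 + 256 * v ^ 7 + 64 * v ^ 8, by ring⟩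
    have h8' : ∃ a, (1 + 2 * w) ^ 4 * (1 + 2 * w2) ^ 2 = 1 + 4 * a := by
      refine ⟨(2 * w + 6 * w ^ 2 + 8 * w ^ 3 + 4 * w ^ 4) * (1 + 2 * w2) ^ 2 + (w2 + w2 ^ 2), by ring⟩
    obtain ⟨a, ha⟩ := h8
    obtain ⟨b, hb⟩ := h8'
    rw [ha, hb] at hs
    exact ⟨X * b * P ^ 2 - s * a, by linear_combination hs⟩
  refine ⟨g1, ?_⟩
  obtain ⟨r, hr⟩ := g1
  refine ⟨2 * r + X * E 4 w * E 8 psi, ?_⟩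
  rw [hr, map_pow, ← h4, hw4]; ring

lemma final {F : ℤ⟦X⟧} (h : F * phim * E 12 phim = E 3 phim * E 4 phim) (k : ℕ) (hk : 4 ≤ k) :
    (∀ n : ℕ, 1 ≤ n → (2 : ℤ) ^ (3 * k + 2) ∣ coeff (2 ^ (k + 2) * n) F) ∧
    (∀ n : ℕ, (2 : ℤ) ^ (3 * k + 1) ∣ coeff (2 ^ (k + 1) * (4 * n + 3)) F) ∧
    (∀ n : ℕ, (2 : ℤ) ^ (3 * k) ∣ coeff (2 ^ (k + 1) * (8 * n + 5)) F) := by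
  obtain ⟨t, ht⟩ := div_phim (X * E 2 psi ^ 4) 4
  obtain ⟨s, hs⟩ := div_phim (X * psi ^ 8) 8
  have h3 : U^[3] F = 1 + 32 * t := step3 (step2 (step1 h)) ht
  have h4 := step4 ht hs
  have key : ∀ j m, 1 ≤ m → coeff (2 ^ (j + 4) * m) F = 32 * 8 * coeff m (U^[j] s) := by
    intro j m hm
    have : 2 ^ (j + 4) * m = 2 ^ 3 * (2 ^ (j + 1) * m) := by ring
    rw [this, ← coeff_iter, h3, map_add, coeff_one, if_neg (by positivity), zero_add]
    have h32 : (32 : ℤ⟦X⟧) * t = ((32 : ℤ) : ℤ⟦X⟧) * t := by norm_num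
    have h8 : (8 : ℤ⟦X⟧) * s = ((8 : ℤ) : ℤ⟦X⟧) * s := by norm_num
    rw [h32, coeff_ic, ← coeff_iter, Function.iterate_succ_apply, h4, h8]
    have : ∀ j, U^[j] (((8 : ℤ) : ℤ⟦X⟧) * s) = ((8 : ℤ) : ℤ⟦X⟧) * U^[j] s := by
      intro j
      induction j with
      | zero => rfl
      | succ j ih => rw [Function.iterate_succ_apply', ih, U_const, Function.iterate_succ_apply']
    rw [this, coeff_ic]; ring
  have key2 : ∀ j m, 1 ≤ m → ∃ c r : ℤ, coeff (2 ^ (j + 4) * m) F = 32 * 8 ^ (j + 1) * (c * coeff m s + 256 * r) := by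
    intro j m hm
    obtain ⟨q, hq⟩ := step9 hs j
    obtain ⟨c, r, hc⟩ := poly_mod (s := s) q
    refine ⟨c, coeff m (s * r), ?_⟩
    rw [key j m hm, hq, hc]
    have : (8 ^ j * (s * (c + 256 * r)) : ℤ⟦X⟧) = ((8 ^ j : ℤ) : ℤ⟦X⟧) * ((c : ℤ⟦X⟧) * s + ((256 : ℤ) : ℤ⟦X⟧) * (s * r)) := by
      push_cast; ring
    rw [this, coeff_ic, map_add, coeff_ic, coeff_ic]; ring
  obtain ⟨⟨r4, hr4⟩, ⟨r2, hr2⟩⟩ := s_mod hs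
  obtain ⟨i, rfl⟩ : ∃ i, k = i + 3 := ⟨k - 3, by omega⟩
  have p8 : ∀ j : ℕ, (8 : ℤ) ^ j = 2 ^ (3 * j) := fun j => by rw [pow_mul]; norm_num
  refine ⟨?_, ?_, ?_⟩
  · intro n hn
    obtain ⟨c, r, hh⟩ := key2 (i + 1) n hn
    rw [show i + 3 + 2 = i + 1 + 4 by ring, hh, p8]
    exact ⟨c * coeff n s + 256 * r, by ring⟩
  · intro n
    obtain ⟨c, r, hh⟩ := key2 i (4 * n + 3) (by omega)
    have : coeff (4 * n + 3) s = 4 * coeff (4 * n + 3) r4 := by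
      conv_lhs => rw [hr4]
      rw [map_add, show 4 * n + 3 = (4 * n + 2) + 1 by ring, coeff_succ_X_mul, coeff_E, if_neg (by omega), zero_add,
        show (4 : ℤ⟦X⟧) = ((4 : ℤ) : ℤ⟦X⟧) by norm_num, coeff_ic]
    rw [show i + 3 + 1 = i + 4 by ring, hh, p8, this]
    exact ⟨c * coeff (4 * n + 3) r4 + 64 * r, by ring⟩
  · intro n
    obtain ⟨c, r, hh⟩ := key2 i (8 * n + 5) (by omega)
    have : coeff (8 * n + 5) s = 2 * coeff (8 * n + 5) r2 := by
      conv_lhs => rw [hr2]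
      rw [map_add, show 8 * n + 5 = (8 * n + 4) + 1 by ring, coeff_succ_X_mul, coeff_E, if_neg (by omega), zero_add,
        show (2 : ℤ⟦X⟧) = ((2 : ℤ) : ℤ⟦X⟧) by norm_num, coeff_ic]
    rw [show i + 3 + 1 = i + 4 by ring, hh, p8, this]
    exact ⟨c * coeff (8 * n + 5) r2 + 128 * r, by ring⟩


open scoped PowerSeries.WithPiTopology

lemma order_tend (c : ℕ → ℤ) : Filter.Tendsto (fun i => (((c (i + 1) : ℤ) : ℤ⟦X⟧) * X ^ (i + 1)).order)
    Filter.atTop (nhds ⊤) := by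
  refine ENat.tendsto_nhds_top_iff_natCast_lt.mpr (fun n ↦ Filter.eventually_atTop.mpr ⟨n, ?_⟩)
  intro m hm
  have : ((m + 1 : ℕ) : ℕ∞) ≤ (((c (m + 1) : ℤ) : ℤ⟦X⟧) * X ^ (m + 1)).order := by
    apply PowerSeries.nat_le_order
    intro i hi
    exact (X_pow_dvd_iff.mp (dvd_mul_left _ _)) i hi
  refine lt_of_lt_of_le ?_ this
  exact_mod_cast Nat.lt_succ_of_le hm

lemma mult_c (c : ℕ → ℤ) : Multipliable (fun i : ℕ => 1 + ((c (i + 1) : ℤ) : ℤ⟦X⟧) * X ^ (i + 1)) :=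
  WithPiTopology.multipliable_one_add_of_tendsto_order_atTop_nhds_top _ (order_tend c)

noncomputable def pr (c : ℕ → ℤ) : ℤ⟦X⟧ := ∏' i : ℕ, (1 + ((c (i + 1) : ℤ) : ℤ⟦X⟧) * X ^ (i + 1))

lemma hp_pr (c : ℕ → ℤ) : HasProd (fun i : ℕ => 1 + ((c (i + 1) : ℤ) : ℤ⟦X⟧) * X ^ (i + 1)) (pr c) :=
  (mult_c c).hasProd

lemma cont_E (m : ℕ) [NeZero m] : Continuous (E m) := by
  rw [continuous_iff_continuousAt]
  intro f
  rw [ContinuousAt, WithPiTopology.tendsto_iff_coeff_tendsto]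
  intro d
  simp only [E, coeff_expand]
  split_ifs
  · exact (WithPiTopology.continuous_coeff ℤ _).continuousAt
  · exact tendsto_const_nhds

lemma E_pr (m : ℕ) [NeZero m] (a : ℤ) : E m (pr fun _ => a) = pr (fun i => if m ∣ i then a else 0) := by
  have hm : 0 < m := Nat.pos_of_ne_zero (NeZero.ne m)
  have h1 := (hp_pr (fun _ => a)).map (E m) (cont_E m)
  have hg : Function.Injective (fun i : ℕ => m * (i + 1) - 1) := by
    intro i j h
    dsimp only at h
    have h1 : 1 ≤ m * (i + 1) := Nat.mul_pos hm (by omega)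
    have h2 : 1 ≤ m * (j + 1) := Nat.mul_pos hm (by omega)
    have : m * (i + 1) = m * (j + 1) := by omega
    have := Nat.eq_of_mul_eq_mul_left hm this
    omega
  suffices h2 : Function.mulSupport (fun i : ℕ => 1 + (((if m ∣ i + 1 then a else 0 : ℤ)) : ℤ⟦X⟧) * X ^ (i + 1)) ⊆
      Set.range (fun i : ℕ => m * (i + 1) - 1) by
    rw [← h1.tprod_eq, pr, ← hg.tprod_eq h2]
    apply tprod_congr
    intro i
    have h1 : 1 ≤ m * (i + 1) := Nat.mul_pos hm (by omega)
    have h2 : m * (i + 1) - 1 + 1 = m * (i + 1) := by omega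
    simp only [Function.comp, h2, dvd_mul_right, if_true, map_add, map_one, map_mul, map_pow, map_intCast]
    rw [show E m X = X ^ m from expand_X _ _, pow_mul]
  · intro i hi
    rw [Function.mem_mulSupport] at hi
    by_cases h : m ∣ i + 1
    · obtain ⟨c, hc⟩ := h
      rcases c with _ | c
      · omega
      · exact ⟨c, by dsimp only; omega⟩
    · simp [h] at hi

lemma cc_pr (c : ℕ → ℤ) : constantCoeff (pr c) = 1 := by
  have := (hp_pr c).map (constantCoeff (R := ℤ)) (WithPiTopology.continuous_constantCoeff ℤ)
  rw [← this.tprod_eq]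
  simp [Function.comp_def]

lemma pr_ne (c : ℕ → ℤ) : pr c ≠ 0 := fun h => by have := cc_pr c; simp [h] at this

def pp (i : ℕ) : Prop := ¬ 4 ∣ i ∧ ¬ 3 ∣ i
instance : DecidablePred pp := fun i => inferInstanceAs (Decidable (¬ 4 ∣ i ∧ ¬ 3 ∣ i))

lemma gfA : HasProd (fun i : ℕ => if pp (i + 1) then ∑' j : ℕ, (X : ℤ⟦X⟧) ^ ((i + 1) * j) else 1)
    (PowerSeries.mk fun n => (regularCount 4 3 n : ℤ)) := by
  have e : (fun n => (regularCount 4 3 n : ℤ)) = fun n => ((Nat.Partition.restricted n pp).card : ℤ) := by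
    funext n
    rw [regularCount, Fintype.card_subtype, Nat.Partition.restricted]
    rfl
  rw [e]
  exact Nat.Partition.hasProd_powerSeriesMk_card_restricted ℤ pp

lemma gfB : (PowerSeries.mk fun n => (regularDistinctCount 4 3 n : ℤ)) =
    pr (fun i => if pp i then 1 else 0) := by
  have h := Nat.Partition.hasProd_genFun (R := ℤ) (fun i c => if pp i ∧ c < 2 then 1 else 0)
  have h2 : (fun i : ℕ => (1 : ℤ⟦X⟧) + ∑' j : ℕ, (if pp (i + 1) ∧ j + 1 < 2 then (1 : ℤ) else 0) • (X : ℤ⟦X⟧) ^ ((i + 1) * (j + 1)))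
     = (fun i : ℕ => 1 + (((if pp (i + 1) then 1 else 0) : ℤ) : ℤ⟦X⟧) * X ^ (i + 1)) := by
    funext i
    rw [tsum_eq_single 0]
    · by_cases hp : pp (i + 1) <;> simp [hp]
    · intro j hj
      rw [if_neg (by omega), zero_smul]
  have h' := h
  have h3 : HasProd (fun i : ℕ => 1 + (((if pp (i + 1) then 1 else 0) : ℤ) : ℤ⟦X⟧) * X ^ (i + 1))
      (Nat.Partition.genFun (R := ℤ) (fun i c => if pp i ∧ c < 2 then 1 else 0)) := by
    rw [← h2]; exact h'
  rw [(hp_pr (fun i => if pp i then 1 else 0)).unique h3]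
  ext n
  rw [coeff_mk, Nat.Partition.coeff_genFun, regularDistinctCount, Fintype.card_subtype, Finset.card_filter]
  push_cast
  apply Finset.sum_congr rfl
  intro p _
  rw [Finsupp.prod, Finset.prod_boole]
  congr 1
  rw [Multiset.nodup_iff_count_le_one]
  simp only [Multiset.toFinsupp_support, Multiset.mem_toFinset, Multiset.toFinsupp_apply, pp, eq_iff_iff]
  constructor
  · rintro ⟨h1, h2⟩ i hi
    exact ⟨h2 i hi, by have := h1 i; omega⟩
  · intro h
    refine ⟨fun i => ?_, fun i hi => (h i hi).1⟩
    by_cases hi : i ∈ p.parts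
    · have := (h i hi).2; omega
    · rw [Multiset.count_eq_zero_of_notMem hi]; omega

def cd (m : ℕ) (a : ℤ) : ℕ → ℤ := fun i => if m ∣ i then a else 0

lemma prodA : (PowerSeries.mk fun n => (regularCount 4 3 n : ℤ)) * pr (cd 1 (-1)) * pr (cd 12 (-1)) =
    pr (cd 3 (-1)) * pr (cd 4 (-1)) := by
  have h1 := (gfA.mul (hp_pr (cd 1 (-1)))).mul (hp_pr (cd 12 (-1)))
  have h2 := (hp_pr (cd 3 (-1))).mul (hp_pr (cd 4 (-1)))
  refine h1.unique ?_
  convert h2 using 2 with i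
  have key : (∑' j : ℕ, (X : ℤ⟦X⟧) ^ ((i + 1) * j)) * (1 - X ^ (i + 1)) = 1 := by
    simp_rw [pow_mul]
    exact WithPiTopology.tsum_pow_mul_one_sub_of_constantCoeff_eq_zero (by simp)
  by_cases h3 : 3 ∣ i + 1 <;> by_cases h4 : 4 ∣ i + 1
  · have h12 : 12 ∣ i + 1 := by omega
    simp [pp, cd, h3, h4, h12]
  · have h12 : ¬ 12 ∣ i + 1 := by omega
    simp [pp, cd, h3, h4, h12]
  · have h12 : ¬ 12 ∣ i + 1 := by omega
    simp [pp, cd, h3, h4, h12]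
  · have h12 : ¬ 12 ∣ i + 1 := by omega
    simp [pp, cd, h3, h4, h12, ← sub_eq_add_neg, key]

lemma prodB : pr (fun i => if pp i then 1 else 0) * pr (cd 3 1) * pr (cd 4 1) =
    pr (cd 1 1) * pr (cd 12 1) := by
  have h1 := ((hp_pr (fun i => if pp i then 1 else 0)).mul (hp_pr (cd 3 1))).mul (hp_pr (cd 4 1))
  have h2 := (hp_pr (cd 1 1)).mul (hp_pr (cd 12 1))
  refine h1.unique ?_
  convert h2 using 2 with i
  by_cases h3 : 3 ∣ i + 1 <;> by_cases h4 : 4 ∣ i + 1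
  · have h12 : 12 ∣ i + 1 := by omega
    simp [pp, cd, h3, h4, h12]
  · have h12 : ¬ 12 ∣ i + 1 := by omega
    simp [pp, cd, h3, h4, h12]
  · have h12 : ¬ 12 ∣ i + 1 := by omega
    simp [pp, cd, h3, h4, h12]
  · have h12 : ¬ 12 ∣ i + 1 := by omega
    simp [pp, cd, h3, h4, h12]

/-! finite form of the Gauss identity -/

noncomputable def g (m : ℕ) : ℤ⟦X⟧ := invOfUnit (1 - X ^ (m + 1)) 1
lemma g_mul (m : ℕ) : (1 - X ^ (m + 1)) * g m = 1 := mul_invOfUnit _ _ (by simp)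

noncomputable def ee (n : ℕ) : ℤ⟦X⟧ := ∏ i ∈ Finset.range n, (1 - X ^ (i + 1))
noncomputable def dd (n : ℕ) : ℤ⟦X⟧ := ∏ i ∈ Finset.range n, (1 + X ^ (i + 1))
noncomputable def rr (n : ℕ) : ℤ⟦X⟧ := ∏ i ∈ Finset.range n, g i

lemma er (n : ℕ) : ee n * rr n = 1 := by
  rw [ee, rr, ← Finset.prod_mul_distrib]
  exact Finset.prod_eq_one (fun i _ => g_mul i)

lemma rr_succ (n : ℕ) : (1 - X ^ (n + 1)) * rr (n + 1) = rr n := by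
  rw [rr, Finset.prod_range_succ, ← rr]
  linear_combination rr n * g_mul n

/-- partial sums -/
noncomputable def TT (n K : ℕ) : ℤ⟦X⟧ := rr n * rr n +
  2 * ∑ k ∈ Finset.range K, (-1) ^ (k + 1) * X ^ ((k + 1) ^ 2) * rr (n - (k + 1)) * rr (n + (k + 1))

lemma TT_tel (n K : ℕ) (hK : K ≤ n) : (1 - X ^ (2 * (n + 1))) * TT (n + 1) K - TT n K =
    2 * (-1) ^ K * X ^ (n + 1 + K ^ 2 + K) * rr (n - K) * rr (n + 1 + K) := by
  induction K with
  | zero =>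
    simp only [TT, Finset.range_zero, Finset.sum_empty]
    have := rr_succ n
    simp only [Nat.sub_zero, add_zero, pow_zero, mul_one, ne_eq, OfNat.ofNat_ne_zero, not_false_eq_true, zero_pow, mul_zero]
    rw [← this]
    ring
  | succ K ih =>
    have ih := ih (by omega)
    have s1 : ∀ n, TT n (K + 1) = TT n K + 2 * ((-1) ^ (K + 1) * X ^ ((K + 1) ^ 2) * rr (n - (K + 1)) * rr (n + (K + 1))) := by
      intro n
      rw [TT, Finset.sum_range_succ, TT]; ring
    rw [s1, s1]
    obtain ⟨c, rfl⟩ : ∃ c, n = K + 1 + c := ⟨n - (K + 1), by omega⟩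
    have e1 : K + 1 + c - K = c + 1 := by omega
    have e2 : K + 1 + c + 1 - (K + 1) = c + 1 := by omega
    have e3 : K + 1 + c - (K + 1) = c := by omega
    rw [e1] at ih
    rw [e2, e3]
    have h1 := rr_succ c
    have h2 := rr_succ (K + 1 + c + (K + 1))
    have e4 : K + 1 + c + 1 + K = K + 1 + c + (K + 1) := by ring
    have e5 : K + 1 + c + 1 + (K + 1) = K + 1 + c + (K + 1) + 1 := by ring
    rw [e4] at ih
    rw [e5]
    rw [← h2] at ih ⊢
    rw [← h1]
    linear_combination ih

lemma TT_one (n : ℕ) : ee n * dd n * TT n n = 1 := by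
  induction n with
  | zero => simp [ee, dd, TT, rr]
  | succ n ih =>
    have h := TT_tel n n le_rfl
    have s1 : TT (n + 1) (n + 1) = TT (n + 1) n + 2 * ((-1) ^ (n + 1) * X ^ ((n + 1) ^ 2) * rr 0 * rr (n + 1 + (n + 1))) := by
      rw [TT, Finset.sum_range_succ, TT, Nat.sub_self]; ring
    have e1 : ee (n + 1) = ee n * (1 - X ^ (n + 1)) := by rw [ee, Finset.prod_range_succ, ee]
    have d1 : dd (n + 1) = dd n * (1 + X ^ (n + 1)) := by rw [dd, Finset.prod_range_succ, dd]
    have h2 := rr_succ (n + 1 + n)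
    rw [show n + 1 + n + 1 = n + 1 + (n + 1) by ring] at h2
    rw [Nat.sub_self] at h
    have key : (1 - X ^ (2 * (n + 1))) * TT (n + 1) (n + 1) = TT n n := by
      rw [s1]
      rw [← h2] at h
      linear_combination h
    rw [e1, d1]
    linear_combination ih + ee n * dd n * key

lemma ee_rr_lo (n j : ℕ) (h : j ≤ n) : (X : ℤ⟦X⟧) ^ (j + 1) ∣ ee n * rr j - 1 := by
  induction n, h using Nat.le_induction with
  | base => rw [er, sub_self]; exact dvd_zero _
  | succ n hn ih =>
    have e1 : ee (n + 1) = ee n * (1 - X ^ (n + 1)) := by rw [ee, Finset.prod_range_succ, ee]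
    have : ee (n + 1) * rr j - 1 = (ee n * rr j - 1) - X ^ (n + 1) * (ee n * rr j) := by rw [e1]; ring
    rw [this]
    exact dvd_sub ih (Dvd.dvd.mul_right (pow_dvd_pow _ (by omega)) _)

lemma ee_rr_hi (n j : ℕ) (h : n ≤ j) : (X : ℤ⟦X⟧) ^ (n + 1) ∣ ee n * rr j - 1 := by
  induction j, h using Nat.le_induction with
  | base => rw [er, sub_self]; exact dvd_zero _
  | succ j hj ih =>
    have h1 := rr_succ j
    have : ee n * rr (j + 1) - 1 = (ee n * rr j - 1) + X ^ (j + 1) * (ee n * rr (j + 1)) := by rw [← h1]; ring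
    rw [this]
    exact dvd_add ih (Dvd.dvd.mul_right (pow_dvd_pow _ (by omega)) _)

lemma TT_mod (n : ℕ) : (X : ℤ⟦X⟧) ^ (n + 1) ∣ ee n ^ 2 * TT n n -
    (1 + 2 * ∑ k ∈ Finset.range n, (-1) ^ (k + 1) * X ^ ((k + 1) ^ 2)) := by
  have : ee n ^ 2 * TT n n - (1 + 2 * ∑ k ∈ Finset.range n, (-1) ^ (k + 1) * X ^ ((k + 1) ^ 2)) =
     2 * ∑ k ∈ Finset.range n, (-1) ^ (k + 1) * (X ^ ((k + 1) ^ 2) *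
       ((ee n * rr (n - (k + 1))) * (ee n * rr (n + (k + 1))) - 1)) := by
    have h1 : ∑ k ∈ Finset.range n, (-1) ^ (k + 1) * (X ^ ((k + 1) ^ 2) *
       ((ee n * rr (n - (k + 1))) * (ee n * rr (n + (k + 1))) - 1)) =
       ee n ^ 2 * ∑ k ∈ Finset.range n, (-1) ^ (k + 1) * X ^ ((k + 1) ^ 2) * rr (n - (k + 1)) * rr (n + (k + 1))
       - ∑ k ∈ Finset.range n, (-1) ^ (k + 1) * X ^ ((k + 1) ^ 2) := by
      rw [Finset.mul_sum, ← Finset.sum_sub_distrib]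
      exact Finset.sum_congr rfl (fun k _ => by ring)
    rw [h1, TT]
    linear_combination (ee n * rr n + 1) * er n
  rw [this]
  apply Dvd.dvd.mul_left
  apply Finset.dvd_sum
  intro k hk
  rw [Finset.mem_range] at hk
  apply Dvd.dvd.mul_left
  obtain ⟨a, ha⟩ := ee_rr_lo n (n - (k + 1)) (by omega)
  obtain ⟨b, hb⟩ := ee_rr_hi n (n + (k + 1)) (by omega)
  have : X ^ ((k + 1) ^ 2) * ((ee n * rr (n - (k + 1))) * (ee n * rr (n + (k + 1))) - 1) =
    X ^ ((k + 1) ^ 2 + (n - (k + 1) + 1)) * (a * (ee n * rr (n + (k + 1)))) + X ^ (n + 1) * (X ^ ((k + 1) ^ 2) * b) := by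
    rw [pow_add]
    linear_combination X ^ ((k + 1) ^ 2) * (ee n * rr (n + (k + 1))) * ha + X ^ ((k + 1) ^ 2) * hb
  rw [this]
  refine dvd_add (Dvd.dvd.mul_right (pow_dvd_pow _ ?_) _) (dvd_mul_right _ _)
  have : k + 1 ≤ (k + 1) ^ 2 := by nlinarith
  omega

lemma coeff_phi_sq (m : ℕ) (hm : m ≠ 0) : coeff (m ^ 2) phi = 2 := by
  rw [phi, th, coeff_mk]
  have : Nat.card {i // wphi i = m ^ 2} = 2 := by
    have h : {i | wphi i = m ^ 2} = {(m : ℤ), -(m : ℤ)} := by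
      ext i
      simp only [Set.mem_ofPred_eq, Set.mem_insert_iff, Set.mem_singleton_iff]
      zify
      rw [wphi_c, sq_eq_sq_iff_eq_or_eq_neg]
    show Nat.card {i | wphi i = m ^ 2} = 2
    rw [h, Nat.card_coe_set_eq, Set.ncard_pair (by omega)]
  rw [this]; rfl

lemma coeff_phi_nsq (d : ℕ) (hd : ∀ m, m ^ 2 ≠ d) : coeff d phi = 0 := by
  rw [phi, th, coeff_mk]
  have : IsEmpty {i // wphi i = d} := by
    refine ⟨fun i => hd i.1.natAbs ?_⟩
    have := i.2
    zify at this ⊢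
    rw [wphi_c] at this
    rw [sq_abs, this]
  simp

lemma coeff_phi_zero : coeff 0 phi = 1 := by
  rw [phi, th, coeff_mk]
  have : Nat.card {i // wphi i = 0} = 1 := by
    rw [Nat.card_eq_one_iff_exists]
    refine ⟨⟨0, by simp [wphi]⟩, ?_⟩
    rintro ⟨i, hi⟩
    have := wphi_c i
    rw [hi] at this
    simp only [Subtype.mk.injEq]
    simpa using this.symm
  simp [this]

lemma phim_mod (n : ℕ) : (X : ℤ⟦X⟧) ^ (n + 1) ∣ phim -
    (1 + 2 * ∑ k ∈ Finset.range n, (-1) ^ (k + 1) * X ^ ((k + 1) ^ 2)) := by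
  rw [X_pow_dvd_iff]
  intro d hd
  have hc : coeff d (1 + 2 * ∑ k ∈ Finset.range n, (-1) ^ (k + 1) * X ^ ((k + 1) ^ 2) : ℤ⟦X⟧)
      = (if d = 0 then 1 else 0) + 2 * ∑ k ∈ Finset.range n, (-1) ^ (k + 1) * (if d = (k + 1) ^ 2 then 1 else 0) := by
    rw [map_add, coeff_one, show (2 : ℤ⟦X⟧) = C (2 : ℤ) by simp, coeff_C_mul, map_sum]
    congr 2
    apply Finset.sum_congr rfl
    intro k _
    rw [show ((-1 : ℤ⟦X⟧)) ^ (k + 1) = C ((-1 : ℤ) ^ (k + 1)) by simp, coeff_C_mul, coeff_X_pow]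
  rw [map_sub, hc, phim, evalNegHom, coeff_rescale]
  rcases Nat.eq_zero_or_pos d with rfl | hpos
  · rw [coeff_phi_zero, Finset.sum_eq_zero]
    · simp
    · intro k _
      rw [if_neg (by positivity), mul_zero]
  by_cases h : ∃ m, m ^ 2 = d
  · obtain ⟨m, rfl⟩ := h
    have hm : m ≠ 0 := by rintro rfl; simp at hpos
    obtain ⟨k, rfl⟩ := Nat.exists_eq_succ_of_ne_zero hm
    rw [coeff_phi_sq _ hm, Finset.sum_eq_single k]
    · have : (-1 : ℤ) ^ ((k + 1) ^ 2) = (-1) ^ (k + 1) := by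
        rcases Nat.even_or_odd (k + 1) with h | h
        · rw [h.neg_one_pow, (h.pow_of_ne_zero (by norm_num)).neg_one_pow]
        · rw [h.neg_one_pow, h.pow.neg_one_pow]
      simp [this]
      ring
    · intro b _ hb
      rw [if_neg, mul_zero]
      intro h
      have := Nat.pow_left_injective (n := 2) (by norm_num) h
      simp at this; omega
    · intro hk
      rw [Finset.mem_range] at hk
      nlinarith
  · push Not at h
    rw [coeff_phi_nsq d h, Finset.sum_eq_zero]
    · simp [hpos.ne']
    · intro k _
      rw [if_neg (fun hh => h _ hh.symm), mul_zero]

lemma gauss : phim * pr (cd 1 1) = pr (cd 1 (-1)) := by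
  have h1 := (hp_pr (cd 1 1)).tendsto_prod_nat
  have h2 := (hp_pr (cd 1 (-1))).tendsto_prod_nat
  have h3 := h1.const_mul phim
  refine tendsto_nhds_unique h3 ?_
  rw [WithPiTopology.tendsto_iff_coeff_tendsto] at h2 ⊢
  intro d
  refine (h2 d).congr' ?_
  filter_upwards [Filter.eventually_ge_atTop d] with n hn
  have e1 : ∏ i ∈ Finset.range n, (1 + ((cd 1 1 (i + 1) : ℤ) : ℤ⟦X⟧) * X ^ (i + 1)) = dd n :=
    Finset.prod_congr rfl (fun i _ => by simp [cd])
  have e2 : ∏ i ∈ Finset.range n, (1 + ((cd 1 (-1) (i + 1) : ℤ) : ℤ⟦X⟧) * X ^ (i + 1)) = ee n :=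
    Finset.prod_congr rfl (fun i _ => by simp [cd]; ring)
  rw [e1, e2]
  have h : (X : ℤ⟦X⟧) ^ (n + 1) ∣ ee n - phim * dd n := by
    have := dvd_sub (TT_mod n) (phim_mod n)
    have := Dvd.dvd.mul_left this (dd n)
    convert this using 1
    linear_combination - ee n * TT_one n
  have := X_pow_dvd_iff.mp h d (by omega)
  rw [map_sub] at this
  omega

lemma gauss_E (m : ℕ) [NeZero m] : E m phim * pr (cd m 1) = pr (cd m (-1)) := by
  have h := congrArg (E m) gauss
  have h1 : ∀ a, cd 1 a = fun _ => a := fun a => by funext i; simp [cd]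
  rw [map_mul, h1, h1, E_pr, E_pr] at h
  exact h

lemma gf : (PowerSeries.mk fun n => (Rbar 4 3 n : ℤ)) * phim * E 12 phim = E 3 phim * E 4 phim := by
  have h0 : (PowerSeries.mk fun n => (Rbar 4 3 n : ℤ)) =
     (PowerSeries.mk fun n => (regularCount 4 3 n : ℤ)) * pr (fun i => if pp i then 1 else 0) := by
    rw [← gfB]
    ext n
    rw [coeff_mk, coeff_mul, Rbar]
    simp only [coeff_mk]
    push_cast
    rfl
  have hA := prodA
  rw [← gauss, ← gauss_E 3, ← gauss_E 4, ← gauss_E 12] at hA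
  have hB := prodB
  rw [h0]
  generalize (PowerSeries.mk fun n => (regularCount 4 3 n : ℤ)) = A at *
  apply mul_right_cancel₀ (mul_ne_zero (pr_ne (cd 1 1)) (mul_ne_zero (pr_ne (cd 12 1)) (mul_ne_zero (pr_ne (cd 3 1)) (pr_ne (cd 4 1)))))
  linear_combination pr (fun i => if pp i then 1 else 0) * pr (cd 3 1) * pr (cd 4 1) * hA + E 3 phim * E 4 phim * pr (cd 3 1) * pr (cd 4 1) * hB


end helpers

theorem Rbar_four_three_high_powers_of_two (k : ℕ) (hk : 4 ≤ k) :
    (∀ n : ℕ, 1 ≤ n → Rbar 4 3 (2 ^ (k + 2) * n) ≡ 0 [MOD 2 ^ (3 * k + 2)]) ∧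
    (∀ n : ℕ, Rbar 4 3 (2 ^ (k + 1) * (4 * n + 3)) ≡ 0 [MOD 2 ^ (3 * k + 1)]) ∧
    (∀ n : ℕ, Rbar 4 3 (2 ^ (k + 1) * (8 * n + 5)) ≡ 0 [MOD 2 ^ (3 * k)]) := by 
  obtain ⟨h1, h2, h3⟩ := final gf k hk
  refine ⟨fun n hn => ?_, fun n => ?_, fun n => ?_⟩
  · have := h1 n hn
    rw [PowerSeries.coeff_mk] at this
    exact Nat.modEq_zero_iff_dvd.mpr (by exact_mod_cast this)
  · have := h2 n
    rw [PowerSeries.coeff_mk] at this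
    exact Nat.modEq_zero_iff_dvd.mpr (by exact_mod_cast this)
  · have := h3 n
    rw [PowerSeries.coeff_mk] at this
    exact Nat.modEq_zero_iff_dvd.mpr (by exact_mod_cast this)
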